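/- Let R be an associative ring, G an infinite group with G ≠ G' (G is not equal to its derived subgroup), and A an RG-module. If A/C_A(G) is not a minimax R-module but A/C_A(H) is a minimax R-module for every proper subgroup H of G, then G has no proper subgroups of finite index and G/G' is isomorphic to a quasi-cyclic q-group C_{q^∞} for some prime q. -/

import Mathlib

/-- `C_A(H)`: the `R`-submodule of `A` consisting of the elements fixed by every
element of the subgroup `H` of `G`. -/
def moduleCentralizer (R : Type*) [Ring R] {G : Type*} [Group G] (A : Type*)
    [AddCommGroup A] [Module R A] [DistribMulAction G A] [SMulCommClass G R A]
    (H : Subgroup G) : Submodule R A where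
  carrier := {a | ∀ g ∈ H, g • a = a}
  add_mem' := fun {a b} ha hb g hg => by rw [smul_add, ha g hg, hb g hg]
  zero_mem' := fun g _ => smul_zero g
  smul_mem' := fun r a ha g hg => by rw [smul_comm, ha g hg]

/-- An `R`-module is minimax if it has a finite series of submodules each of whose
factors is either a Noetherian `R`-module or an Artinian `R`-module. -/
def Module.IsMinimax (R M : Type*) [Ring R] [AddCommGroup M] [Module R M] : Prop :=
  ∃ (n : ℕ) (f : Fin (n + 1) → Submodule R M),
    Monotone f ∧ f 0 = ⊥ ∧ f (Fin.last n) = ⊤ ∧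
    ∀ i : Fin n,
      IsNoetherian R (↥(f i.succ) ⧸ Submodule.comap (f i.succ).subtype (f i.castSucc)) ∨
      IsArtinian R (↥(f i.succ) ⧸ Submodule.comap (f i.succ).subtype (f i.castSucc))

/-- The quasi-cyclic (Prüfer) `q`-group `C_{q^∞}`: the `q`-primary component of `ℚ/ℤ`. -/
def PruferGroup (q : ℕ) (hq : q.Prime) :
    AddSubgroup (ℚ ⧸ AddSubgroup.zmultiples (1 : ℚ)) :=
  haveI : Fact q.Prime := ⟨hq⟩
  AddCommGroup.primaryComponent (ℚ ⧸ AddSubgroup.zmultiples (1 : ℚ)) q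

/-!
Centralizers turn joins of subgroups into intersections of submodules, and `M ⧸ X ⊓ Y` is minimax
when `M ⧸ X` and `M ⧸ Y` are. So `G` is not the join of two proper subgroups, i.e. `⊤` is
sup-irreducible among the subgroups of `G`, and this passes to every nontrivial quotient.

An infinite group of this kind has no maximal subgroup: joining one with `⟨g⟩` for `g` outside it
would make the group infinite cyclic, and `ℤ = 2ℤ + 3ℤ`. Hence it has no proper subgroup of finite
index, and its abelianization `Q`, if nontrivial, is infinite; `Q` is divisible because `Q / pQ`
would be a vector space without hyperplanes.

If `x : Q` has prime order `p`, extend `1/p ↦ x` to an embedding of the Prüfer `p`-group. Its image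
is divisible, hence a direct summand, hence all of `Q`. Such an `x` exists: otherwise `Q` is
torsion-free and divisible, and `Q / ⟨x⟩` for `x ≠ 0` contains elements of order 2 and of order 3.
-/

section Minimax

variable {R : Type*} [Ring R] {M N P : Type*} [AddCommGroup M] [Module R M]
  [AddCommGroup N] [Module R N] [AddCommGroup P] [Module R P]

variable (R M) in
/-- The relation between consecutive terms `X ≤ Y` of a minimax series: `Y / X` is Noetherian or
Artinian. A minimax series is then a `RelSeries` for this relation. -/
def minimaxRel : SetRel (Submodule R M) (Submodule R M) :=
  {q | q.1 ≤ q.2 ∧ (IsNoetherian R (↥q.2 ⧸ q.1.comap q.2.subtype) ∨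
    IsArtinian R (↥q.2 ⧸ q.1.comap q.2.subtype))}

theorem isMinimax_iff_exists_relSeries :
    Module.IsMinimax R M ↔ ∃ s : RelSeries (minimaxRel R M), s.head = ⊥ ∧ s.last = ⊤ := by
  constructor
  · rintro ⟨n, f, hmono, hbot, htop, hfactor⟩
    exact ⟨⟨n, f, fun i => ⟨hmono i.castSucc_le_succ, hfactor i⟩⟩, hbot, htop⟩
  · rintro ⟨s, hbot, htop⟩
    exact ⟨s.length, s, Fin.monotone_iff_le_succ.2 fun i => (s.step i).1, hbot, htop,
      fun i => (s.step i).2⟩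

theorem inf_comap_mem_minimaxRel (S : Submodule R M) (f : M →ₗ[R] N) {X Y : Submodule R N}
    (hXY : (X, Y) ∈ minimaxRel R N) : (S ⊓ X.comap f, S ⊓ Y.comap f) ∈ minimaxRel R M := by
  obtain ⟨hle : X ≤ Y, hfactor⟩ := hXY
  let g : ↥(S ⊓ Y.comap f) →ₗ[R] ↥Y := f.restrict fun _ hx => hx.2
  let g' := Submodule.mapQ ((S ⊓ X.comap f).comap (S ⊓ Y.comap f).subtype) (X.comap Y.subtype) g
    fun _ hx => hx.2
  have hg' : Function.Injective g' := by
    refine LinearMap.ker_eq_bot.1 ((Submodule.ker_mapQ _ _ g _).trans ?_)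
    rw [← le_bot_iff, Submodule.map_le_iff_le_comap]
    intro x hx
    rw [Submodule.comap_bot, Submodule.ker_mkQ]
    exact ⟨x.2.1, hx⟩
  refine ⟨inf_le_inf_left S (Submodule.comap_mono hle), ?_⟩
  rcases hfactor with (_ : IsNoetherian R (Y ⧸ X.comap Y.subtype)) |
    (_ : IsArtinian R (Y ⧸ X.comap Y.subtype))
  · exact .inl (isNoetherian_of_injective g' hg')
  · exact .inr (isArtinian_of_injective g' hg')

theorem isMinimax_of_disjoint_ker {f : M →ₗ[R] N} {g : M →ₗ[R] P}
    (hfg : Disjoint (LinearMap.ker f) (LinearMap.ker g))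
    (hN : Module.IsMinimax R N) (hP : Module.IsMinimax R P) : Module.IsMinimax R M := by
  rw [isMinimax_iff_exists_relSeries] at *
  obtain ⟨s, hs_head, hs_last⟩ := hP
  obtain ⟨t, ht_head, ht_last⟩ := hN
  let s' : RelSeries (minimaxRel R M) :=
    s.map ⟨fun X => LinearMap.ker f ⊓ X.comap g, inf_comap_mem_minimaxRel _ g⟩
  let t' : RelSeries (minimaxRel R M) :=
    t.map ⟨fun X => ⊤ ⊓ X.comap f, inf_comap_mem_minimaxRel _ f⟩
  have hs'_head : s'.head = ⊥ := by
    simpa [s', hs_head] using hfg.eq_bot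
  have hs't' : s'.last = t'.head := by
    simp [s', t', hs_last, ht_head]
  have ht'_last : t'.last = ⊤ := by
    simp [t', ht_last]
  exact ⟨s'.smash t' hs't', by simp [hs'_head], by simp [ht'_last]⟩

theorem isMinimax_quotient_inf {X Y : Submodule R M} (hX : Module.IsMinimax R (M ⧸ X))
    (hY : Module.IsMinimax R (M ⧸ Y)) : Module.IsMinimax R (M ⧸ X ⊓ Y) := by
  refine isMinimax_of_disjoint_ker (f := Submodule.factor inf_le_left)
    (g := Submodule.factor inf_le_right) ?_ hX hY
  rw [disjoint_iff_inf_le]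
  rintro m ⟨hmX, hmY⟩
  obtain ⟨a, rfl⟩ := Submodule.Quotient.mk_surjective _ m
  simp_all

end Minimax

section Centralizer

variable {R : Type*} [Ring R] {G : Type*} [Group G] {A : Type*}
    [AddCommGroup A] [Module R A] [DistribMulAction G A] [SMulCommClass G R A]

theorem moduleCentralizer_sup (H K : Subgroup G) :
    moduleCentralizer R A (H ⊔ K) = moduleCentralizer R A H ⊓ moduleCentralizer R A K := by
  ext a
  exact sup_le_iff (c := MulAction.stabilizer G a)

theorem supIrred_top_of_isMinimax_quotient_moduleCentralizer [Nontrivial G]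
    (hG : ¬ Module.IsMinimax R (A ⧸ moduleCentralizer R A (⊤ : Subgroup G)))
    (hH : ∀ H : Subgroup G, H ≠ ⊤ → Module.IsMinimax R (A ⧸ moduleCentralizer R A H)) :
    SupIrred (⊤ : Subgroup G) := by
  refine ⟨not_isMin_top, fun H K hHK => ?_⟩
  by_contra! hproper
  rw [← hHK, moduleCentralizer_sup] at hG
  exact hG (isMinimax_quotient_inf (hH H hproper.1) (hH K hproper.2))

end Centralizer

section SupIrredTop

variable {G H : Type*} [Group G] [Group H]

@[to_additive]
theorem not_isCyclic_of_supIrred_top [Infinite G] (hG : SupIrred (⊤ : Subgroup G)) :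
    ¬ IsCyclic G := by
  rintro ⟨g, hg⟩
  have hsup : Subgroup.zpowers (g ^ 2) ⊔ Subgroup.zpowers (g ^ 3) = ⊤ := by
    have hmem : (g ^ 2)⁻¹ * g ^ 3 ∈ Subgroup.zpowers (g ^ 2) ⊔ Subgroup.zpowers (g ^ 3) :=
      Subgroup.mul_mem_sup (inv_mem (Subgroup.mem_zpowers _)) (Subgroup.mem_zpowers _)
    rw [show (g ^ 2)⁻¹ * g ^ 3 = g by group] at hmem
    exact top_le_iff.1 fun x _ => Subgroup.zpowers_le.2 hmem (hg x)
  have hne : ∀ k : ℕ, k ≠ 1 → Subgroup.zpowers (g ^ k) ≠ ⊤ := fun k hk htop => by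
    have hmem : g ∈ Subgroup.zpowers (g ^ k) := htop ▸ Subgroup.mem_top g
    rw [mem_zpowers_pow_iff, Infinite.orderOf_eq_zero_of_forall_mem_zpowers hg,
      Nat.gcd_zero_right] at hmem
    exact hk hmem
  exact (hG.2 hsup).elim (hne 2 (by norm_num)) (hne 3 (by norm_num))

@[to_additive]
theorem not_isCoatom_of_subgroup_supIrred_top [Infinite G] (hG : SupIrred (⊤ : Subgroup G))
    (M : Subgroup G) : ¬ IsCoatom M := by
  intro hM
  obtain ⟨g, -, hg⟩ := SetLike.exists_of_lt hM.lt_top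
  have hsup : M ⊔ Subgroup.zpowers g = ⊤ := hM.2 _ (by simpa using hg)
  have hcyclic : Subgroup.zpowers g = ⊤ := (hG.2 hsup).resolve_left hM.1
  exact not_isCyclic_of_supIrred_top hG ⟨g, (Subgroup.eq_top_iff' _).1 hcyclic⟩

@[to_additive]
theorem subgroup_exists_isCoatom_ge_of_finiteIndex (K : Subgroup G) [K.FiniteIndex] (hK : K ≠ ⊤) :
    ∃ M : Subgroup G, IsCoatom M ∧ K ≤ M := by
  obtain ⟨M, ⟨hKM, hM⟩, hmin⟩ := exists_minimalFor_of_wellFoundedLT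
    (fun L : Subgroup G => K ≤ L ∧ L ≠ ⊤) Subgroup.index ⟨K, le_rfl, hK⟩
  have : M.FiniteIndex := Subgroup.finiteIndex_of_le hKM
  refine ⟨M, ⟨hM, fun L hML => ?_⟩, hKM⟩
  by_contra hL
  have hlt := Subgroup.index_strictAnti hML
  exact hlt.not_ge (hmin ⟨hKM.trans hML.le, hL⟩ hlt.le)

@[to_additive]
theorem subgroup_eq_top_of_finiteIndex_of_supIrred_top [Infinite G]
    (hG : SupIrred (⊤ : Subgroup G)) (K : Subgroup G) [K.FiniteIndex] : K = ⊤ := by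
  by_contra hK
  obtain ⟨M, hM, -⟩ := subgroup_exists_isCoatom_ge_of_finiteIndex K hK
  exact not_isCoatom_of_subgroup_supIrred_top hG M hM

@[to_additive]
theorem subgroup_supIrred_top_of_surjective [Nontrivial H] {f : G →* H}
    (hf : Function.Surjective f) (hG : SupIrred (⊤ : Subgroup G)) :
    SupIrred (⊤ : Subgroup H) := by
  refine ⟨not_isMin_top, fun K L hKL => ?_⟩
  have hsup : K.comap f ⊔ L.comap f = ⊤ := by
    rw [Subgroup.comap_sup_eq f K L hf, hKL, Subgroup.comap_top]
  exact (hG.2 hsup).imp (fun h => Subgroup.comap_injective hf h)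
    (fun h => Subgroup.comap_injective hf h)

@[to_additive]
theorem infinite_of_surjective_of_subgroup_supIrred_top [Infinite G] [Nontrivial H] {f : G →* H}
    (hf : Function.Surjective f) (hG : SupIrred (⊤ : Subgroup G)) : Infinite H := by
  by_contra hH
  rw [not_infinite_iff_finite] at hH
  have hker : f.ker = ⊤ := subgroup_eq_top_of_finiteIndex_of_supIrred_top hG f.ker
  obtain ⟨h, hh⟩ := exists_ne (1 : H)
  obtain ⟨g, rfl⟩ := hf h
  exact hh (f.mem_ker.1 (hker ▸ Subgroup.mem_top g))

@[to_additive]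
theorem bijective_of_leftInverse_of_subgroup_supIrred_top [Nontrivial H] {f : H →* G}
    {g : G →* H} (hgf : Function.LeftInverse g f) (hG : SupIrred (⊤ : Subgroup G)) :
    Function.Bijective f := by
  have hsup : f.range ⊔ g.ker = ⊤ := by
    refine (Subgroup.eq_top_iff' _).2 fun x => ?_
    have hx : (f (g x))⁻¹ * x ∈ g.ker := by
      rw [g.mem_ker, map_mul, map_inv, hgf (g x), inv_mul_cancel]
    rw [← mul_inv_cancel_left (f (g x)) x]
    exact Subgroup.mul_mem_sup ⟨g x, rfl⟩ hx
  have hker : g.ker ≠ ⊤ := fun hker => by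
    obtain ⟨h, hh⟩ := exists_ne (1 : H)
    have hfh : f h ∈ g.ker := hker ▸ Subgroup.mem_top _
    exact hh (by rw [← hgf h, g.mem_ker.1 hfh])
  exact ⟨hgf.injective, MonoidHom.range_eq_top.1 ((hG.2 hsup).resolve_right hker)⟩

theorem supIrred_orderIso_apply {α β : Type*} [SemilatticeSup α] [SemilatticeSup β] (e : α ≃o β)
    {a : α} (ha : SupIrred a) : SupIrred (e a) := by
  refine ⟨fun h => ha.1 (e.isMin_apply.1 h), fun b c hbc => ?_⟩
  have hsup : e.symm b ⊔ e.symm c = a := by rw [← e.symm.map_sup, hbc, e.symm_apply_apply]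
  exact (ha.2 hsup).imp e.symm_apply_eq.1 e.symm_apply_eq.1

theorem supIrred_top_additive (hG : SupIrred (⊤ : Subgroup G)) :
    SupIrred (⊤ : AddSubgroup (Additive G)) :=
  supIrred_orderIso_apply Subgroup.toAddSubgroup hG

end SupIrredTop

section Torsion

@[to_additive]
theorem exists_prime_orderOf_pow {M : Type*} [Monoid M] {x : M} (hx : x ≠ 1)
    (hx_fin : orderOf x ≠ 0) : ∃ p : ℕ, p.Prime ∧ ∃ n : ℕ, orderOf (x ^ n) = p := by
  obtain ⟨p, hp, hdvd⟩ := Nat.exists_prime_and_dvd (mt orderOf_eq_one_iff.1 hx)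
  exact ⟨p, hp, orderOf x / p, orderOf_pow_orderOf_div hx_fin hdvd⟩

theorem injective_of_torsion_ker_eq_zero {B C : Type*} [AddGroup B] [AddMonoid C] {p : ℕ}
    {f : B →+ C} (hB : ∀ b : B, ∃ k : ℕ, p ^ k • b = 0)
    (hf : ∀ b : B, p • b = 0 → f b = 0 → b = 0) : Function.Injective f := by
  rw [injective_iff_map_eq_zero]
  intro b hb
  obtain ⟨k, hk⟩ := hB b
  induction k with
  | zero => simpa using hk
  | succ k ih =>
    refine ih (hf _ ?_ ?_)
    · rwa [← mul_nsmul', ← pow_succ']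
    · rw [map_nsmul, hb, nsmul_zero]

end Torsion

section Divisible

variable {Q : Type*} [AddCommGroup Q]

theorem exists_isCoatom_addSubgroup_of_zmod_module {p : ℕ} [Fact p.Prime] [Module (ZMod p) Q]
    [Nontrivial Q] : ∃ M : AddSubgroup Q, IsCoatom M := by
  have : IsCoatomic (AddSubgroup Q) :=
    (AddSubgroup.toZModSubmodule p).isCoatomic_iff.2 inferInstance
  obtain ⟨M, hM, -⟩ := (eq_top_or_exists_le_coatom (⊥ : AddSubgroup Q)).resolve_left bot_ne_top
  exact ⟨M, hM⟩

theorem nsmul_surjective_of_supIrred_top [Infinite Q] (hQ : SupIrred (⊤ : AddSubgroup Q)) {p : ℕ}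
    (hp : p.Prime) : Function.Surjective fun x : Q => p • x := by
  have : Fact p.Prime := ⟨hp⟩
  let W := (nsmulAddMonoidHom (α := Q) p).range
  suffices hW : W = ⊤ from AddMonoidHom.range_eq_top.1 hW
  by_contra hW
  have : Nontrivial (Q ⧸ W) := QuotientAddGroup.nontrivial_iff.2 hW
  have hmk : Function.Surjective (QuotientAddGroup.mk' W) := QuotientAddGroup.mk'_surjective W
  have : Infinite (Q ⧸ W) := infinite_of_surjective_of_addSubgroup_supIrred_top hmk hQ
  let _ : Module (ZMod p) (Q ⧸ W) := AddCommGroup.zmodModule fun y => by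
    obtain ⟨x, rfl⟩ := hmk y
    rw [← map_nsmul]
    exact (QuotientAddGroup.eq_zero_iff _).2 ⟨x, rfl⟩
  obtain ⟨M, hM⟩ := exists_isCoatom_addSubgroup_of_zmod_module (Q := Q ⧸ W) (p := p)
  exact not_isCoatom_of_addSubgroup_supIrred_top
    (addSubgroup_supIrred_top_of_surjective hmk hQ) M hM

theorem baer_of_prime_nsmul_surjective
    (hQ : ∀ p : ℕ, p.Prime → Function.Surjective fun x : Q => p • x) : Module.Baer ℤ Q := by
  have hnat : ∀ n : ℕ, n ≠ 0 → Function.Surjective fun x : Q => n • x := by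
    intro n
    induction n using induction_on_primes with
    | zero => simp
    | one => exact fun _ x => ⟨x, one_nsmul x⟩
    | prime_mul p n hp ih =>
      intro hpn
      simp only [mul_smul]
      exact (hQ p hp).comp (ih (right_ne_zero_of_mul hpn))
  let _ : DivisibleBy Q ℕ := divisibleByOfSMulRightSurj Q ℕ fun {n} hn => hnat n hn
  let _ : DivisibleBy Q ℤ := AddGroup.divisibleByIntOfDivisibleByNat Q
  exact Module.Baer.of_divisible Q

theorem exists_addMonoidHom_apply_eq (hQ : Module.Baer ℤ Q) {B : Type*} [AddCommGroup B] {b : B}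
    {x : Q} (h : addOrderOf x ∣ addOrderOf b) : ∃ f : B →+ Q, f b = x := by
  let i : ZMod (addOrderOf b) →+ B := ZMod.lift _ ⟨zmultiplesHom B b, by simp⟩
  let j : ZMod (addOrderOf b) →+ Q :=
    ZMod.lift _ ⟨zmultiplesHom Q x, by simpa using addOrderOf_dvd_iff_nsmul_eq_zero.1 h⟩
  have hi : Function.Injective i := (ZMod.lift_injective _).2 fun m hm => by
    rwa [ZMod.intCast_zmod_eq_zero_iff_dvd, addOrderOf_dvd_iff_zsmul_eq_zero]
  obtain ⟨f, hf⟩ := hQ.extension_property_addMonoidHom i hi j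
  have hib : i 1 = b := by rw [← Int.cast_one, ZMod.lift_coe]; simp
  have hjx : j 1 = x := by rw [← Int.cast_one, ZMod.lift_coe]; simp
  exact ⟨f, by rw [← hib, ← hjx, ← hf, AddMonoidHom.comp_apply]⟩

theorem addOrderOf_mk_zmultiples_nsmul {y : Q} (hy : addOrderOf y = 0) (n : ℕ) :
    addOrderOf (QuotientAddGroup.mk y : Q ⧸ AddSubgroup.zmultiples (n • y)) = n := by
  refine Nat.dvd_antisymm ?_ ?_
  · rw [addOrderOf_dvd_iff_nsmul_eq_zero]
    exact (QuotientAddGroup.eq_zero_iff _).2 (AddSubgroup.mem_zmultiples _)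
  · set k := addOrderOf (QuotientAddGroup.mk y : Q ⧸ AddSubgroup.zmultiples (n • y)) with hk
    obtain ⟨j, hj : j • n • y = k • y⟩ : k • y ∈ AddSubgroup.zmultiples (n • y) := by
      rw [← QuotientAddGroup.eq_zero_iff, QuotientAddGroup.mk_nsmul, hk, addOrderOf_nsmul_eq_zero]
    have hjk : (j * n - k : ℤ) • y = 0 := by
      rw [sub_smul, mul_smul, natCast_zsmul, natCast_zsmul, hj, sub_self]
    rw [← addOrderOf_dvd_iff_zsmul_eq_zero, hy, Nat.cast_zero, zero_dvd_iff, sub_eq_zero] at hjk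
    exact Int.natCast_dvd_natCast.1 ⟨j, by rw [← hjk, mul_comm]⟩

end Divisible

section Prufer

variable {p : ℕ} (hp : p.Prime)

theorem exists_pow_nsmul_pruferGroup_eq_zero (x : PruferGroup p hp) : ∃ k : ℕ, p ^ k • x = 0 := by
  obtain ⟨k, hk⟩ := x.2
  exact ⟨k, Subtype.ext hk⟩

theorem baer_pruferGroup : Module.Baer ℤ (PruferGroup p hp) := by
  refine baer_of_prime_nsmul_surjective fun ℓ hℓ x => ?_
  obtain ⟨k, hk⟩ := exists_pow_nsmul_pruferGroup_eq_zero hp x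
  by_cases h : ℓ = p
  · subst h
    let y : AddCircle (1 : ℚ) := DivisibleBy.div (x : AddCircle (1 : ℚ)) (ℓ : ℤ)
    have hy : ℓ • y = x := by
      simpa using DivisibleBy.div_cancel (x : AddCircle (1 : ℚ)) (Int.natCast_ne_zero.2 hℓ.ne_zero)
    refine ⟨⟨y, k + 1, ?_⟩, Subtype.ext hy⟩
    rw [pow_succ, mul_smul]
    exact (congrArg _ hy).trans (congrArg Subtype.val hk)
  · have hcop : ℓ.Coprime (addOrderOf x) :=
      (((Nat.coprime_primes hℓ hp).2 h).pow_right k).coprime_dvd_right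
        (addOrderOf_dvd_of_nsmul_eq_zero hk)
    obtain ⟨m, hm⟩ := exists_nsmul_eq_self_of_coprime hcop
    exact ⟨m • x, (smul_comm ℓ m x).trans hm⟩

theorem exists_pruferGroup_addOrderOf_eq_and_torsion_mem_zmultiples :
    ∃ z : PruferGroup p hp, addOrderOf z = p ∧
      ∀ t : PruferGroup p hp, p • t = 0 → t ∈ AddSubgroup.zmultiples z := by
  let c : AddCircle (1 : ℚ) := ((1 / p : ℚ) : AddCircle (1 : ℚ))
  have hc : addOrderOf c = p := AddCircle.addOrderOf_period_div hp.pos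
  let z : PruferGroup p hp :=
    ⟨c, 1, by rw [pow_one]; exact addOrderOf_dvd_iff_nsmul_eq_zero.1 hc.dvd⟩
  have hz : addOrderOf z = p :=
    (addOrderOf_injective (PruferGroup p hp).subtype Subtype.val_injective z).symm.trans hc
  refine ⟨z, hz, fun t ht => ?_⟩
  obtain ⟨m, -, hm⟩ := (AddCircle.nsmul_eq_zero_iff hp.pos).1 (congrArg Subtype.val ht)
  refine ⟨m, Subtype.ext ?_⟩
  calc (((m : ℤ) • z : PruferGroup p hp) : AddCircle (1 : ℚ)) = m • c := by simp [z]
    _ = ((m / p * 1 : ℚ) : AddCircle (1 : ℚ)) := by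
      rw [← AddCircle.coe_nsmul, nsmul_eq_mul, mul_one, mul_one_div]
    _ = t := hm

end Prufer

section Classification

variable {Q : Type*} [AddCommGroup Q] [Infinite Q]

theorem nonempty_addEquiv_pruferGroup (hQ : SupIrred (⊤ : AddSubgroup Q)) {p : ℕ} (hp : p.Prime)
    {x : Q} (hx : addOrderOf x = p) : Nonempty (Q ≃+ PruferGroup p hp) := by
  obtain ⟨z, hz, htorsion⟩ := exists_pruferGroup_addOrderOf_eq_and_torsion_mem_zmultiples hp
  have hQ_baer := baer_of_prime_nsmul_surjective fun _ hℓ => nsmul_surjective_of_supIrred_top hQ hℓ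
  obtain ⟨f, hf⟩ := exists_addMonoidHom_apply_eq hQ_baer (b := z) (hx.trans hz.symm).dvd
  have hf_inj : Function.Injective f := by
    refine injective_of_torsion_ker_eq_zero (exists_pow_nsmul_pruferGroup_eq_zero hp)
      fun t ht hft => ?_
    obtain ⟨m, rfl⟩ := htorsion t ht
    rwa [map_zsmul, hf, ← addOrderOf_dvd_iff_zsmul_eq_zero, hx, ← hz,
      addOrderOf_dvd_iff_zsmul_eq_zero] at hft
  obtain ⟨g, hg⟩ := (baer_pruferGroup hp).extension_property_addMonoidHom f hf_inj
    (AddMonoidHom.id _)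
  have : Nontrivial (PruferGroup p hp) :=
    ⟨z, 0, fun h => hp.ne_one (by rw [← hz, h, addOrderOf_zero])⟩
  exact ⟨(AddEquiv.ofBijective f
    (bijective_of_leftInverse_of_addSubgroup_supIrred_top (DFunLike.congr_fun hg) hQ)).symm⟩

theorem prime_addOrderOf_unique (hQ : SupIrred (⊤ : AddSubgroup Q)) {p ℓ : ℕ} (hp : p.Prime)
    (hℓ : ℓ.Prime) {x y : Q} (hx : addOrderOf x = p) (hy : addOrderOf y = ℓ) : ℓ = p := by
  obtain ⟨e⟩ := nonempty_addEquiv_pruferGroup hQ hp hx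
  obtain ⟨k, hk⟩ := exists_pow_nsmul_pruferGroup_eq_zero hp (e y)
  have hdvd : ℓ ∣ p ^ k := by
    rw [← hy, addOrderOf_dvd_iff_nsmul_eq_zero, ← e.map_eq_zero_iff, map_nsmul, hk]
  exact (Nat.prime_dvd_prime_iff_eq hℓ hp).1 (hℓ.dvd_of_dvd_pow hdvd)

theorem exists_prime_addOrderOf (hQ : SupIrred (⊤ : AddSubgroup Q)) :
    ∃ p : ℕ, p.Prime ∧ ∃ x : Q, addOrderOf x = p := by
  by_contra! hQ_ne
  have hQ_free : ∀ x : Q, x ≠ 0 → addOrderOf x = 0 := fun x hx => by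
    by_contra hx_fin
    obtain ⟨p, hp, n, hn⟩ := exists_prime_addOrderOf_nsmul hx hx_fin
    exact hQ_ne p hp _ hn
  obtain ⟨x, hx⟩ := exists_ne (0 : Q)
  let mk := QuotientAddGroup.mk' (AddSubgroup.zmultiples x)
  have hmk : Function.Surjective mk := QuotientAddGroup.mk'_surjective _
  have hmk_order : ∀ p : ℕ, p.Prime → ∃ y, addOrderOf (mk y) = p := fun p hp => by
    obtain ⟨y, rfl⟩ := nsmul_surjective_of_supIrred_top hQ hp x
    exact ⟨y, addOrderOf_mk_zmultiples_nsmul (hQ_free y (right_ne_zero_of_smul hx)) p⟩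
  obtain ⟨y, hy⟩ := hmk_order 2 Nat.prime_two
  obtain ⟨z, hz⟩ := hmk_order 3 Nat.prime_three
  have : Nontrivial (Q ⧸ AddSubgroup.zmultiples x) :=
    ⟨mk y, 0, fun h => by simp [h] at hy⟩
  have : Infinite (Q ⧸ AddSubgroup.zmultiples x) :=
    infinite_of_surjective_of_addSubgroup_supIrred_top hmk hQ
  have h32 := prime_addOrderOf_unique (addSubgroup_supIrred_top_of_surjective hmk hQ)
    Nat.prime_two Nat.prime_three hy hz
  norm_num at h32

theorem exists_addEquiv_pruferGroup_of_supIrred_top (hQ : SupIrred (⊤ : AddSubgroup Q)) :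
    ∃ (q : ℕ) (hq : q.Prime), Nonempty (Q ≃+ PruferGroup q hq) := by
  obtain ⟨q, hq, x, hx⟩ := exists_prime_addOrderOf hQ
  exact ⟨q, hq, nonempty_addEquiv_pruferGroup hQ hq hx⟩

end Classification

/-- Lemma 2.2 (minimax version): if `G` is infinite, `G ≠ G'`, `A/C_A(G)` is not minimax
but `A/C_A(H)` is minimax for every proper subgroup `H`, then `G` has no proper subgroups
of finite index and `G/G'` is a quasi-cyclic `q`-group for some prime `q`. -/
theorem minimax_proper_subgroups (R : Type*) [Ring R] (G : Type*) [Group G] [Infinite G]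
    (A : Type*) [AddCommGroup A] [Module R A] [DistribMulAction G A] [SMulCommClass G R A]
    (hG' : commutator G ≠ ⊤)
    (hG : ¬ Module.IsMinimax R (A ⧸ moduleCentralizer R A (⊤ : Subgroup G)))
    (hH : ∀ H : Subgroup G, H ≠ ⊤ → Module.IsMinimax R (A ⧸ moduleCentralizer R A H)) :
    (∀ H : Subgroup G, H.FiniteIndex → H = ⊤) ∧
    ∃ (q : ℕ) (hq : q.Prime),
      Nonempty (Abelianization G ≃* Multiplicative (PruferGroup q hq)) := by
  have hsup : SupIrred (⊤ : Subgroup G) :=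
    supIrred_top_of_isMinimax_quotient_moduleCentralizer hG hH
  refine ⟨fun H _ => subgroup_eq_top_of_finiteIndex_of_supIrred_top hsup H, ?_⟩
  have hof : Function.Surjective (Abelianization.of (G := G)) := QuotientGroup.mk'_surjective _
  have : Nontrivial (Abelianization G) := QuotientGroup.nontrivial_iff.2 hG'
  have : Infinite (Abelianization G) := infinite_of_surjective_of_subgroup_supIrred_top hof hsup
  obtain ⟨q, hq, ⟨e⟩⟩ := exists_addEquiv_pruferGroup_of_supIrred_top
    (supIrred_top_additive (subgroup_supIrred_top_of_surjective hof hsup))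
  exact ⟨q, hq, ⟨AddEquiv.toMultiplicativeRight e⟩⟩
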